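/- arXiv:1211.4511 — 4 statements merged into one kernel-verified Lean document; each statement's English description precedes it below -/
import Mathlib

section
/- Let α : ℝⁿ → ℝⁿ be a differentiable map (the coordinate expression of a one-form on Q = ℝⁿ) and let Ω₀ be the canonical symplectic form on ℝⁿ × ℝⁿ, Ω₀((x₁,p₁),(x₂,p₂)) = ⟨x₁,p₂⟩ − ⟨x₂,p₁⟩. For x ∈ ℝⁿ let T_x = {(v, Dα(x) v) : v ∈ ℝⁿ} ⊆ ℝⁿ × ℝⁿ be the tangent space to the graph of α (the image of the one-form) at (x, α(x)), where Dα(x) is the Fréchet derivative of α at x. Then T_x is a Lagrangian subspace of (ℝⁿ × ℝⁿ, Ω₀) if and only if Dα(x) is self-adjoint with respect to the Euclidean inner product. In particular, the image of α is a Lagrangian submanifold (all its tangent spaces are Lagrangian) if and only if Dα(x) is self-adjoint for every x, i.e. the one-form α is closed. -/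
/-- Euclidean inner product on `ℝⁿ`. -/
def dotR {n : ℕ} (a b : Fin n → ℝ) : ℝ := ∑ i, a i * b i

/-- The canonical symplectic bilinear form on `ℝⁿ × ℝⁿ`:
`Ω₀((x₁,p₁),(x₂,p₂)) = ⟨x₁,p₂⟩ − ⟨x₂,p₁⟩`. -/
def Omega0 {n : ℕ} (v w : (Fin n → ℝ) × (Fin n → ℝ)) : ℝ := dotR v.1 w.2 - dotR w.1 v.2

/-- The tangent space to the graph of a one-form `α` at `(x, α(x))`:
`T_x = {(v, Dα(x)v) : v ∈ ℝⁿ}`, as a subspace of `ℝⁿ × ℝⁿ`. -/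
noncomputable def graphTangent {n : ℕ} (α : (Fin n → ℝ) → (Fin n → ℝ)) (x : Fin n → ℝ) :
    Submodule ℝ ((Fin n → ℝ) × (Fin n → ℝ)) :=
  LinearMap.graph (fderiv ℝ α x).toLinearMap

section Graph

variable {R M N : Type*} [Semiring R] [AddCommMonoid M] [Module R M] [AddCommMonoid N] [Module R N]

theorem forall_mem_graph {f : M →ₗ[R] N} {p : M × N → Prop} :
    (∀ z ∈ f.graph, p z) ↔ ∀ x, p (x, f x) := by
  simp [LinearMap.mem_graph_iff]

theorem finrank_graph (f : M →ₗ[R] N) : Module.finrank R f.graph = Module.finrank R M := by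
  have inj : Function.Injective (LinearMap.id.prod f) := fun _ _ h => congrArg Prod.fst h
  rw [LinearMap.graph_eq_range_prod, LinearMap.finrank_range_of_inj inj]

theorem two_mul_finrank_graph [StrongRankCondition R] [Module.Free R M] [Module.Finite R M]
    [Module.Free R N] [Module.Finite R N] (h : Module.finrank R M = Module.finrank R N)
    (f : M →ₗ[R] N) : 2 * Module.finrank R f.graph = Module.finrank R (M × N) := by
  rw [finrank_graph, Module.finrank_prod, ← h, two_mul]

end Graph

section Lagrangian

/-- A submodule `L` is Lagrangian for a bilinear form `ω` if `ω` vanishes on `L × L` and `L` has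
half the rank of the ambient module. It is not part of the definition that `ω` is symplectic. -/
def IsLagrangian {R V : Type*} [CommSemiring R] [AddCommMonoid V] [Module R V]
    (ω : LinearMap.BilinForm R V) (L : Submodule R V) : Prop :=
  (∀ z ∈ L, ∀ w ∈ L, ω z w = 0) ∧ 2 * Module.finrank R L = Module.finrank R V

variable {R M N : Type*} [CommRing R] [AddCommGroup M] [Module R M] [AddCommGroup N] [Module R N]

/-- The canonical skew form `((x, p), (y, q)) ↦ B x q - B y p` on `M × N` attached to a pairing `B`
of positions in `M` with momenta in `N`. The evaluation pairing of `M` with its dual gives the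
canonical form of the cotangent bundle of `M`. -/
def cotangentForm (B : M →ₗ[R] N →ₗ[R] R) : LinearMap.BilinForm R (M × N) :=
  let C := B.compl₁₂ (LinearMap.fst R M N) (LinearMap.snd R M N)
  C - C.flip

theorem cotangentForm_apply (B : M →ₗ[R] N →ₗ[R] R) (z w : M × N) :
    cotangentForm B z w = B z.1 w.2 - B w.1 z.2 :=
  rfl

theorem cotangentForm_graph_eq_zero_iff (B : M →ₗ[R] N →ₗ[R] R) (f : M →ₗ[R] N) :
    (∀ z ∈ f.graph, ∀ w ∈ f.graph, cotangentForm B z w = 0) ↔ (B.compl₂ f).IsSymm := by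
  simp only [forall_mem_graph, cotangentForm_apply, sub_eq_zero, LinearMap.isSymm_def,
    LinearMap.compl₂_apply, RingHom.id_apply]

theorem isLagrangian_graph_iff_isSymm [StrongRankCondition R] [Module.Free R M]
    [Module.Finite R M] [Module.Free R N] [Module.Finite R N]
    (h : Module.finrank R M = Module.finrank R N) (B : M →ₗ[R] N →ₗ[R] R) (f : M →ₗ[R] N) :
    IsLagrangian (cotangentForm B) f.graph ↔ (B.compl₂ f).IsSymm :=
  (and_iff_left (two_mul_finrank_graph h f)).trans (cotangentForm_graph_eq_zero_iff B f)

end Lagrangian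

theorem isSymm_compl₂_iff_isSelfAdjoint {R M : Type*} [CommSemiring R] [AddCommMonoid M]
    [Module R M] {B : M →ₗ[R] M →ₗ[R] R} (hB : B.IsSymm) (f : M →ₗ[R] M) :
    (B.compl₂ f).IsSymm ↔ B.IsSelfAdjoint f := by
  have swap (x y : M) : B (f x) y = B y (f x) := hB.eq (f x) y
  simp only [LinearMap.isSymm_def, LinearMap.compl₂_apply, RingHom.id_apply,
    LinearMap.IsSelfAdjoint, LinearMap.IsAdjointPair, swap, eq_comm]

theorem isLagrangian_graph_iff_isSelfAdjoint {R M : Type*} [CommRing R] [StrongRankCondition R]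
    [AddCommGroup M] [Module R M] [Module.Free R M] [Module.Finite R M]
    {B : M →ₗ[R] M →ₗ[R] R} (hB : B.IsSymm) (f : M →ₗ[R] M) :
    IsLagrangian (cotangentForm B) f.graph ↔ B.IsSelfAdjoint f :=
  (isLagrangian_graph_iff_isSymm rfl B f).trans (isSymm_compl₂_iff_isSelfAdjoint hB f)

theorem isSymm_dotProductBilin (R ι : Type*) [CommSemiring R] [Fintype ι] :
    (dotProductBilin R R : (ι → R) →ₗ[R] (ι → R) →ₗ[R] R).IsSymm :=
  ⟨dotProduct_comm⟩

section Euclidean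

variable {n : ℕ}

theorem dotR_eq_dotProductBilin (a b : Fin n → ℝ) : dotR a b = dotProductBilin ℝ ℝ a b :=
  rfl

theorem Omega0_eq_cotangentForm (z w : (Fin n → ℝ) × (Fin n → ℝ)) :
    Omega0 z w = cotangentForm (dotProductBilin ℝ ℝ) z w :=
  rfl

end Euclidean

/-- for a differentiable one-form `α` on `ℝⁿ`, the tangent space
`T_x` to the image of `α` is a Lagrangian subspace of `(ℝⁿ × ℝⁿ, Ω₀)` iff
`Dα(x)` is self-adjoint; in particular all tangent spaces are Lagrangian iff
`Dα(x)` is self-adjoint for every `x`, i.e. `α` is closed. -/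
theorem graph_oneform_lagrangian_iff_selfadjoint {n : ℕ}
    (α : (Fin n → ℝ) → (Fin n → ℝ)) (hα : Differentiable ℝ α) :
    (∀ x : Fin n → ℝ,
      ((∀ z ∈ graphTangent α x, ∀ w ∈ graphTangent α x, Omega0 z w = 0) ∧
          2 * Module.finrank ℝ ↥(graphTangent α x) =
            Module.finrank ℝ ((Fin n → ℝ) × (Fin n → ℝ))) ↔
        ∀ v w, dotR (fderiv ℝ α x v) w = dotR v (fderiv ℝ α x w)) ∧
    ((∀ x : Fin n → ℝ,
      (∀ z ∈ graphTangent α x, ∀ w ∈ graphTangent α x, Omega0 z w = 0) ∧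
          2 * Module.finrank ℝ ↥(graphTangent α x) =
            Module.finrank ℝ ((Fin n → ℝ) × (Fin n → ℝ))) ↔
      ∀ x v w, dotR (fderiv ℝ α x v) w = dotR v (fderiv ℝ α x w)) := by
  have lagrangian_iff (x : Fin n → ℝ) :
      IsLagrangian (cotangentForm (dotProductBilin ℝ ℝ)) (graphTangent α x) ↔
        (dotProductBilin ℝ ℝ).IsSelfAdjoint (fderiv ℝ α x) :=
    isLagrangian_graph_iff_isSelfAdjoint (isSymm_dotProductBilin ℝ (Fin n)) _
  simp only [Omega0_eq_cotangentForm, dotR_eq_dotProductBilin]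
  exact ⟨lagrangian_iff, forall_congr' lagrangian_iff⟩
end

section
/- Let E₁ and E₂ be finite-dimensional real vector spaces, E = E₁ × E₂, and let M : E → E be a linear map. Let pr₂ : E → E₂ denote the projection onto the second factor. Then graph(M) + (E × (E₁ × {0})) = E × E (as subspaces of E × E) if and only if the composition pr₂ ∘ M : E → E₂ is surjective. (This is the linear-algebra content of the transversality condition defining a Morse family: taking M to be the Hessian of S at a critical point of S along the fibers, graph(M) is the tangent space to dS(B) and E × (E₁ × {0}) is the tangent space to the conormal bundle of the projection E₁ × E₂ → E₁.) -/
/-!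
Adding `V × N` to the graph of `f : V → W` forgets the first coordinate, so
`graph f + V × N = V × (range f + N)`, which is everything iff `range f + N = W`. For `N = ker g`
with `g` onto, the latter says that `g` restricted to `range f` is still onto. The theorem is the
case `f = M`, `g = pr₂`.
-/

open LinearMap Submodule

theorem comap_map_sup_eq_sup_comap {R M M₂ : Type*} [Semiring R] [AddCommGroup M] [Module R M]
    [AddCommGroup M₂] [Module R M₂] (f : M →ₗ[R] M₂) (p : Submodule R M) (q : Submodule R M₂) :
    (p.map f ⊔ q).comap f = p ⊔ q.comap f := by
  have absorb : (p ⊔ q.comap f).map f ⊔ q = p.map f ⊔ q := by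
    rw [Submodule.map_sup, sup_assoc, sup_eq_right.mpr (map_comap_le f q)]
  rw [← absorb]
  exact comap_map_sup_of_comap_le le_sup_right

theorem map_snd_graph {R V W : Type*} [Semiring R] [AddCommMonoid V] [Module R V]
    [AddCommMonoid W] [Module R W] (f : V →ₗ[R] W) : f.graph.map (snd R V W) = range f := by
  rw [graph_eq_range_prod, ← range_comp, snd_prod]

theorem codisjoint_range_ker_iff_surjective_comp {R V W U : Type*} [Semiring R]
    [AddCommMonoid V] [Module R V] [AddCommGroup W] [Module R W] [AddCommGroup U] [Module R U]
    (f : V →ₗ[R] W) {g : W →ₗ[R] U} (hg : Function.Surjective g) :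
    Codisjoint (range f) (ker g) ↔ Function.Surjective (g ∘ₗ f) := by
  rw [← map_eq_range_iff, range_eq_top.mpr hg, ← range_comp, range_eq_top]

section Group

variable {R V W : Type*} [Semiring R] [AddCommGroup V] [Module R V] [AddCommGroup W] [Module R W]
  (f : V →ₗ[R] W)

theorem graph_sup_top_prod (N : Submodule R W) :
    f.graph ⊔ (⊤ : Submodule R V).prod N = (⊤ : Submodule R V).prod (range f ⊔ N) := by
  rw [← comap_snd, ← comap_snd, ← map_snd_graph, comap_map_sup_eq_sup_comap]

theorem graph_sup_top_prod_eq_top_iff (N : Submodule R W) :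
    f.graph ⊔ (⊤ : Submodule R V).prod N = ⊤ ↔ Codisjoint (range f) N := by
  rw [graph_sup_top_prod, Submodule.prod_eq_top_iff, codisjoint_iff, and_iff_right rfl]

theorem graph_transverse_conormal_iff_surjective_general {U : Type*} [AddCommGroup U] [Module R U]
    {g : W →ₗ[R] U} (hg : Function.Surjective g) :
    f.graph ⊔ (⊤ : Submodule R V).prod (ker g) = ⊤ ↔ Function.Surjective (g ∘ₗ f) :=
  (graph_sup_top_prod_eq_top_iff f (ker g)).trans (codisjoint_range_ker_iff_surjective_comp f hg)

end Group

/-- for finite-dimensional real vector spaces `E₁, E₂`,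
`E = E₁ × E₂` and a linear map `M : E → E`, the transversality condition
`graph(M) + (E × (E₁ × {0})) = E × E` holds if and only if
`pr₂ ∘ M : E → E₂` is surjective. -/
theorem graph_transverse_conormal_iff_surjective
    {E₁ E₂ : Type*} [AddCommGroup E₁] [Module ℝ E₁] [AddCommGroup E₂] [Module ℝ E₂]
    [FiniteDimensional ℝ E₁] [FiniteDimensional ℝ E₂]
    (M : (E₁ × E₂) →ₗ[ℝ] (E₁ × E₂)) :
    (LinearMap.graph M ⊔
        (⊤ : Submodule ℝ (E₁ × E₂)).prod
          ((⊤ : Submodule ℝ E₁).prod (⊥ : Submodule ℝ E₂)) = ⊤) ↔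
      Function.Surjective ((LinearMap.snd ℝ E₁ E₂) ∘ₗ M) := by
  rw [← comap_snd (M := E₁) (⊥ : Submodule ℝ E₂), Submodule.comap_bot]
  exact graph_transverse_conormal_iff_surjective_general M snd_surjective
end

section
/- Let H : ℝⁿ × ℝⁿ × ℝᵏ → ℝ be smooth (Pontryagin's Hamiltonian in variables (q,p,u)), and let (q₀,p₀,u₀) be a point with ∂H/∂u(q₀,p₀,u₀) = 0 at which the k × k matrix ∂²H/∂u∂u is invertible. Then there exist an open neighborhood U of (q₀,p₀) in ℝ²ⁿ and a smooth map u* : U → ℝᵏ with u*(q₀,p₀) = u₀ such that ∂H/∂u(q,p,u*(q,p)) = 0 for all (q,p) ∈ U; moreover, the function H_{u*}(q,p) := H(q,p,u*(q,p)) satisfies ∂H_{u*}/∂q(q,p) = ∂H/∂q(q,p,u*(q,p)) and ∂H_{u*}/∂p(q,p) = ∂H/∂p(q,p,u*(q,p)) on U, so that the graph of dH_{u*} over U is contained in the set ℒ_H = {(q,p,P_q,P_p) : ∃u such that P_q = ∂H/∂q(q,p,u), P_p = ∂H/∂p(q,p,u), ∂H/∂u(q,p,u) = 0}. -/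
/-- The `(q,p)` space `ℝⁿ × ℝⁿ`. -/
abbrev QP (n : ℕ) := (Fin n → ℝ) × (Fin n → ℝ)

/-- The set `ℒ_H ⊆ T*T*Q` in coordinates:
`ℒ_H = {(q,p,P_q,P_p) : ∃u, P_q = ∂H/∂q(q,p,u), P_p = ∂H/∂p(q,p,u), ∂H/∂u(q,p,u) = 0}`. -/
def LH {n k : ℕ} (H : QP n × (Fin k → ℝ) → ℝ) : Set (QP n × QP n) :=
  {y | ∃ u : Fin k → ℝ,
    (∀ i, y.2.1 i = fderiv ℝ H (y.1, u) ((Pi.single i 1, 0), 0)) ∧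
    (∀ i, y.2.2 i = fderiv ℝ H (y.1, u) ((0, Pi.single i 1), 0)) ∧
    (∀ w : Fin k → ℝ, fderiv ℝ H (y.1, u) (0, w) = 0)}

/-! The critical equation `∂H/∂u = 0` is solved for `u` by the implicit function theorem, the
partial derivative of the unknown being the invertible vertical Hessian `∂²H/∂u∂u`. Mathlib's
implicit function is only known to be smooth at the base point, and smoothness at a point does not
spread to a neighborhood when the order is `∞`; but nearby the implicit function is a continuous
solution of an equation with invertible partial derivative, hence smooth there too. Finally
`dH_{u*} = ∂H/∂(q,p) + ∂H/∂u ∘ du*`, and the second term vanishes. -/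

open Set Filter
open scoped Topology ContDiff Matrix

section PartialDerivative

variable (𝕜 : Type*) [NontriviallyNormedField 𝕜]
  {E : Type*} [NormedAddCommGroup E] [NormedSpace 𝕜 E]
  {F : Type*} [NormedAddCommGroup F] [NormedSpace 𝕜 F]
  {G : Type*} [NormedAddCommGroup G] [NormedSpace 𝕜 G]

/-- The partial derivative of `f : E × F → G` in the second variable, as the restriction of the
total derivative to `F`; for a Hamiltonian `H` this is `∂H/∂u`, and iterating it gives
`∂²H/∂u∂u`. It is meaningful only where `f` is differentiable. -/
noncomputable def fderivSnd (f : E × F → G) (a : E × F) : F →L[𝕜] G :=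
  fderiv 𝕜 f a ∘L .inr 𝕜 E F

variable {𝕜}

theorem fderivSnd_eq_zero_iff {f : E × F → G} {a : E × F} :
    fderivSnd 𝕜 f a = 0 ↔ ∀ w, fderiv 𝕜 f a (0, w) = 0 :=
  ContinuousLinearMap.ext_iff

theorem contDiffOn_fderivSnd {f : E × F → G} {Ω : Set (E × F)} {m : ℕ∞ω}
    (hf : ContDiffOn 𝕜 (m + 1) f Ω) (hΩ : IsOpen Ω) : ContDiffOn 𝕜 m (fderivSnd 𝕜 f) Ω :=
  (hf.fderiv_of_isOpen hΩ le_rfl).clm_comp contDiffOn_const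

theorem fderivSnd_fderivSnd_apply {f : E × F → G} {a : E × F}
    (hf : DifferentiableAt 𝕜 (fderiv 𝕜 f) a) (v w : F) :
    fderivSnd 𝕜 (fderivSnd 𝕜 f) a v w = fderiv 𝕜 (fun y ↦ fderiv 𝕜 f y (0, w)) a (0, v) := by
  have hsnd : HasFDerivAt (fderivSnd 𝕜 f) _ a :=
    hf.hasFDerivAt.clm_comp (hasFDerivAt_const (ContinuousLinearMap.inr 𝕜 E F) a)
  have happly := hf.hasFDerivAt.clm_apply (hasFDerivAt_const ((0, w) : E × F) a)
  rw [fderivSnd, hsnd.fderiv, happly.fderiv]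
  simp

/-- The envelope theorem: at a vertical critical point the variation of `u` does not contribute. -/
theorem hasFDerivAt_comp_graph_of_fderivSnd_eq_zero {f : E × F → G} {g : E → F} {x : E}
    (hf : DifferentiableAt 𝕜 f (x, g x)) (hg : DifferentiableAt 𝕜 g x)
    (hcrit : fderivSnd 𝕜 f (x, g x) = 0) :
    HasFDerivAt (fun x' ↦ f (x', g x')) (fderiv 𝕜 f (x, g x) ∘L .inl 𝕜 E F) x := by
  have hcomp := hf.hasFDerivAt.comp x ((hasFDerivAt_id x).prodMk hg.hasFDerivAt)
  convert! hcomp using 1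
  ext v
  have hvert : fderiv 𝕜 f (x, g x) (0, fderiv 𝕜 g x v) = 0 := fderivSnd_eq_zero_iff.1 hcrit _
  have hsplit := (fderiv 𝕜 f (x, g x)).comp_inl_add_comp_inr (v, fderiv 𝕜 g x v)
  simpa [hvert] using hsplit

end PartialDerivative

section ImplicitFunction

variable {𝕜 : Type*} [RCLike 𝕜]
  {E : Type*} [NormedAddCommGroup E] [NormedSpace 𝕜 E] [CompleteSpace E]
  {F : Type*} [NormedAddCommGroup F] [NormedSpace 𝕜 F] [CompleteSpace F]
  {G : Type*} [NormedAddCommGroup G] [NormedSpace 𝕜 G] [CompleteSpace G]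
  {f : E × F → G} {m : ℕ∞ω}

theorem contDiffAt_of_continuousAt_of_implicit {g : E → F} {x : E}
    (hf : ContDiffAt 𝕜 m f (x, g x)) (hm : m ≠ 0) (hinv : (fderivSnd 𝕜 f (x, g x)).IsInvertible)
    (hg : ContinuousAt g x) (hfg : ∀ᶠ z in 𝓝 x, f (z, g z) = f (x, g x)) :
    ContDiffAt 𝕜 m g x := by
  refine (hf.contDiffAt_implicitFunction hm hinv).congr_of_eventuallyEq ?_
  have hgraph : ContinuousAt (fun z ↦ (z, g z)) x := continuousAt_id.prodMk hg
  filter_upwards [hfg, hgraph.eventually (hf.eventually_apply_eq_iff_implicitFunction hm hinv)]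
    with z hz hunique
  exact (hunique.1 hz).symm

theorem exists_contDiffOn_implicit {Ω : Set (E × F)} (hΩ : IsOpen Ω) (hf : ContDiffOn 𝕜 m f Ω)
    (hm : m ≠ 0) {x₀ : E} {u₀ : F} (hmem : (x₀, u₀) ∈ Ω)
    (hinv : (fderivSnd 𝕜 f (x₀, u₀)).IsInvertible) :
    ∃ (U : Set E) (g : E → F), IsOpen U ∧ x₀ ∈ U ∧ ContDiffOn 𝕜 m g U ∧ g x₀ = u₀ ∧
      ∀ z ∈ U, (z, g z) ∈ Ω ∧ f (z, g z) = f (x₀, u₀) := by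
  have hf₀ : ContDiffAt 𝕜 m f (x₀, u₀) := hf.contDiffAt (hΩ.mem_nhds hmem)
  let g : E → F := hf₀.implicitFunction hm hinv
  have hg₀ : g x₀ = u₀ := hf₀.implicitFunction_apply_self hm hinv
  have hgC1 : ContDiffAt 𝕜 1 g x₀ := (hf₀.contDiffAt_implicitFunction hm hinv).of_le
    (ENat.one_le_iff_ne_zero_withTop.2 hm)
  have hgraph : Tendsto (fun z ↦ (z, g z)) (𝓝 x₀) (𝓝 (x₀, u₀)) :=
    hg₀ ▸ continuousAt_id.prodMk hgC1.continuousAt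
  have hcont : ∀ᶠ z in 𝓝 x₀, ContinuousAt g z :=
    (hgC1.eventually (by simp)).mono fun _ hz ↦ hz.continuousAt
  have hsol : ∀ᶠ z in 𝓝 x₀, f (z, g z) = f (x₀, u₀) :=
    hf₀.eventually_apply_implicitFunction hm hinv
  have hinv_near : ∀ᶠ y in 𝓝 (x₀, u₀), (fderivSnd 𝕜 f y).IsInvertible :=
    ((hf₀.continuousAt_fderiv hm).clm_comp continuousAt_const).eventually
      (ContinuousLinearEquiv.isOpen.mem_nhds hinv)
  obtain ⟨U, hU, hUo, hxU⟩ := eventually_nhds_iff.1 <| hcont.and <| hsol.and <|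
    hgraph.eventually (hinv_near.and (hΩ.mem_nhds hmem))
  refine ⟨U, g, hUo, hxU, fun z hz ↦ ContDiffAt.contDiffWithinAt ?_, hg₀,
    fun z hz ↦ ⟨(hU z hz).2.2.2, (hU z hz).2.1⟩⟩
  obtain ⟨hgz, hfz, hinvz, hzΩ⟩ := hU z hz
  have hconst : ∀ᶠ w in 𝓝 z, f (w, g w) = f (z, g z) :=
    eventually_of_mem (hUo.mem_nhds hz) fun w hw ↦ (hU w hw).2.1.trans hfz.symm
  exact contDiffAt_of_continuousAt_of_implicit (hf.contDiffAt (hΩ.mem_nhds hzΩ)) hm hinvz hgz hconst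

end ImplicitFunction

section HessianMatrix

variable {𝕜 : Type*} [NontriviallyNormedField 𝕜] [CompleteSpace 𝕜]
  {E : Type*} [NormedAddCommGroup E] [NormedSpace 𝕜 E]
  {F : Type*} [NormedAddCommGroup F] [NormedSpace 𝕜 F]
  {ι : Type*} [Fintype ι] [DecidableEq ι]

theorem isInvertible_of_isUnit_gramMatrix (b : Module.Basis ι 𝕜 F) {B : F →L[𝕜] F →L[𝕜] 𝕜}
    (hB : IsUnit (Matrix.of fun i j ↦ B (b i) (b j))) : B.IsInvertible := by
  have := b.finiteDimensional_of_finite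
  let b' : Module.Basis ι 𝕜 (F →L[𝕜] 𝕜) := b.dualBasis.map LinearMap.toContinuousLinearMap
  have hmat : LinearMap.toMatrix b b' B = (Matrix.of fun i j ↦ B (b i) (b j))ᵀ := by
    ext i j
    simp [b', LinearMap.toMatrix_apply]
  have hdet : IsUnit (LinearMap.toMatrix b b' B).det := by
    rw [hmat, Matrix.det_transpose]
    exact (Matrix.isUnit_iff_isUnit_det _).1 hB
  exact ⟨(LinearEquiv.ofIsUnitDet hdet).toContinuousLinearEquiv, rfl⟩

theorem isInvertible_fderivSnd_fderivSnd_of_isUnit {H : E × F → 𝕜} {a : E × F}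
    (hH : DifferentiableAt 𝕜 (fderiv 𝕜 H) a) (b : Module.Basis ι 𝕜 F)
    (hHess : IsUnit (Matrix.of fun i j ↦
      fderiv 𝕜 (fun y ↦ fderiv 𝕜 H y (0, b j)) a (0, b i))) :
    (fderivSnd 𝕜 (fderivSnd 𝕜 H) a).IsInvertible :=
  isInvertible_of_isUnit_gramMatrix b <| by simpa only [fderivSnd_fderivSnd_apply hH] using hHess

end HessianMatrix

theorem mem_LH_of_hasFDerivAt {n k : ℕ} {H : QP n × (Fin k → ℝ) → ℝ} {h : QP n → ℝ} {z : QP n}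
    {u : Fin k → ℝ} (hcrit : fderivSnd ℝ H (z, u) = 0)
    (hh : HasFDerivAt h (fderiv ℝ H (z, u) ∘L .inl ℝ (QP n) (Fin k → ℝ)) z) :
    (z, ((fun i ↦ fderiv ℝ h z (Pi.single i 1, 0)),
         (fun i ↦ fderiv ℝ h z (0, Pi.single i 1)))) ∈ LH H := by
  rw [hh.fderiv]
  exact ⟨u, fun _ ↦ rfl, fun _ ↦ rfl, fderivSnd_eq_zero_iff.1 hcrit⟩

theorem regular_ocp_local_section_general {𝕜 : Type*} [RCLike 𝕜]
    {E : Type*} [NormedAddCommGroup E] [NormedSpace 𝕜 E] [CompleteSpace E]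
    {F : Type*} [NormedAddCommGroup F] [NormedSpace 𝕜 F] [CompleteSpace F]
    {H : E × F → 𝕜} {Ω : Set (E × F)} {m : ℕ∞ω} (hΩ : IsOpen Ω) (hH : ContDiffOn 𝕜 (m + 1) H Ω)
    (hm : m ≠ 0) {x₀ : E} {u₀ : F} (hmem : (x₀, u₀) ∈ Ω) (hcrit : fderivSnd 𝕜 H (x₀, u₀) = 0)
    (hreg : (fderivSnd 𝕜 (fderivSnd 𝕜 H) (x₀, u₀)).IsInvertible) :
    ∃ (U : Set E) (ustar : E → F),
      IsOpen U ∧ x₀ ∈ U ∧ ContDiffOn 𝕜 m ustar U ∧ ustar x₀ = u₀ ∧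
      ∀ z ∈ U, (z, ustar z) ∈ Ω ∧ fderivSnd 𝕜 H (z, ustar z) = 0 ∧
        HasFDerivAt (fun z' ↦ H (z', ustar z')) (fderiv 𝕜 H (z, ustar z) ∘L .inl 𝕜 E F) z := by
  obtain ⟨U, g, hUo, hxU, hg, hg₀, hsol⟩ :=
    exists_contDiffOn_implicit hΩ (contDiffOn_fderivSnd hH hΩ) hm hmem hreg
  refine ⟨U, g, hUo, hxU, hg, hg₀, fun z hz ↦ ?_⟩
  obtain ⟨hzΩ, hzsol⟩ := hsol z hz
  have hzcrit : fderivSnd 𝕜 H (z, g z) = 0 := hzsol.trans hcrit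
  have hHz : DifferentiableAt 𝕜 H (z, g z) :=
    (hH.contDiffAt (hΩ.mem_nhds hzΩ)).differentiableAt (by simp)
  have hgz : DifferentiableAt 𝕜 g z := (hg.contDiffAt (hUo.mem_nhds hz)).differentiableAt hm
  exact ⟨hzΩ, hzcrit, hasFDerivAt_comp_graph_of_fderivSnd_eq_zero hHz hgz hzcrit⟩

/-- if `H(q,p,u)` is smooth, `∂H/∂u(q₀,p₀,u₀) = 0` and
`∂²H/∂u∂u(q₀,p₀,u₀)` is invertible, then there is a neighborhood `U` of
`(q₀,p₀)` and a smooth `u* : U → ℝᵏ` with `u*(q₀,p₀) = u₀`,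
`∂H/∂u(q,p,u*(q,p)) = 0` on `U`, the function `H_{u*}(q,p) = H(q,p,u*(q,p))`
has `∂H_{u*}/∂q = ∂H/∂q` and `∂H_{u*}/∂p = ∂H/∂p` at `(q,p,u*(q,p))`, and the
graph of `dH_{u*}` over `U` is contained in `ℒ_H`. -/
theorem regular_ocp_local_section {n k : ℕ}
    (H : QP n × (Fin k → ℝ) → ℝ) (hH : ContDiff ℝ (⊤ : ℕ∞) H)
    (q₀ p₀ : Fin n → ℝ) (u₀ : Fin k → ℝ)
    (hcrit : ∀ w : Fin k → ℝ, fderiv ℝ H ((q₀, p₀), u₀) (0, w) = 0)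
    (hinv : IsUnit (Matrix.of fun i j : Fin k =>
      fderiv ℝ (fun y => fderiv ℝ H y (0, Pi.single j 1)) ((q₀, p₀), u₀)
        (0, Pi.single i 1))) :
    ∃ (U : Set (QP n)) (ustar : QP n → (Fin k → ℝ)),
      IsOpen U ∧ (q₀, p₀) ∈ U ∧
      ContDiffOn ℝ (⊤ : ℕ∞) ustar U ∧
      ustar (q₀, p₀) = u₀ ∧
      (∀ z ∈ U, ∀ w : Fin k → ℝ, fderiv ℝ H (z, ustar z) (0, w) = 0) ∧
      (∀ z ∈ U, ∀ v : QP n,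
        fderiv ℝ (fun z' => H (z', ustar z')) z v = fderiv ℝ H (z, ustar z) (v, 0)) ∧
      (∀ z ∈ U,
        (z, ((fun i => fderiv ℝ (fun z' => H (z', ustar z')) z (Pi.single i 1, 0)),
             (fun i => fderiv ℝ (fun z' => H (z', ustar z')) z (0, Pi.single i 1))))
          ∈ LH H) := by
  have hdiff : DifferentiableAt ℝ (fderiv ℝ H) ((q₀, p₀), u₀) :=
    (hH.fderiv_right (m := ∞) le_rfl).contDiffAt.differentiableAt (by simp)
  have hreg : (fderivSnd ℝ (fderivSnd ℝ H) ((q₀, p₀), u₀)).IsInvertible :=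
    isInvertible_fderivSnd_fderivSnd_of_isUnit hdiff (Pi.basisFun ℝ (Fin k)) <| by
      simpa only [Pi.basisFun_apply] using hinv
  obtain ⟨U, ustar, hUo, hmem, hsmooth, hbase, hU⟩ := regular_ocp_local_section_general
    (m := ∞) isOpen_univ hH.contDiffOn (by simp) (mem_univ _) (fderivSnd_eq_zero_iff.2 hcrit) hreg
  exact ⟨U, ustar, hUo, hmem, hsmooth, hbase,
    fun z hz ↦ fderivSnd_eq_zero_iff.1 (hU z hz).2.1,
    fun z hz ↦ DFunLike.congr_fun (hU z hz).2.2.fderiv,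
    fun z hz ↦ mem_LH_of_hasFDerivAt (hU z hz).2.1 (hU z hz).2.2⟩
end

section
/- Let Γ : ℝⁿ × ℝᵏ → ℝⁿ and L : ℝⁿ × ℝᵏ → ℝ be differentiable, and define the Pontryagin Hamiltonian H : ℝⁿ × ℝⁿ × ℝᵏ → ℝ by H(q,p,u) = ⟨p, Γ(q,u)⟩ − L(q,u). Fix (q,u) ∈ ℝⁿ × ℝᵏ and covector components a, b ∈ ℝⁿ. Then the equations a + bᵀ(∂Γ/∂q)(q,u) = (∂L/∂q)(q,u) and bᵀ(∂Γ/∂u)(q,u) = (∂L/∂u)(q,u) hold if and only if a = −(∂H/∂q)(q,b,u) and (∂H/∂u)(q,b,u) = 0; moreover (∂H/∂p)(q,b,u) = Γ(q,u). Consequently the set ℒ_{C,L} = {(q, q̇, a, b) : ∃u with q̇ = Γ(q,u), a + bᵀ∂Γ/∂q = ∂L/∂q, bᵀ∂Γ/∂u = ∂L/∂u} coincides with {(q, q̇, a, b) : ∃u with q̇ = ∂H/∂p(q,b,u), a = −∂H/∂q(q,b,u), ∂H/∂u(q,b,u) = 0}, i.e. with the image of D_H = {(q,p,∂H/∂p(q,p,u),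 −∂H/∂q(q,p,u)) : ∂H/∂u(q,p,u) = 0} under the Tulczyjew map α(q,p,q̇,ṗ) = (q,q̇,ṗ,p). -/
/-- Coordinates `(q, p, u)` (resp. tangent directions) for `T*Q ×_Q C`. -/
abbrev XQPU (n k : ℕ) := (Fin n → ℝ) × (Fin n → ℝ) × (Fin k → ℝ)

/-- Coordinates `(q, q̇, a, b)` on `T*TQ` (resp. `(q, p, q̇, ṗ)` on `TT*Q`). -/
abbrev R4n (n : ℕ) := (Fin n → ℝ) × (Fin n → ℝ) × (Fin n → ℝ) × (Fin n → ℝ)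

/-- The Pontryagin Hamiltonian `H(q,p,u) = ⟨p, Γ(q,u)⟩ − L(q,u)`. -/
def pontryaginH {n k : ℕ} (Γ : (Fin n → ℝ) × (Fin k → ℝ) → (Fin n → ℝ))
    (L : (Fin n → ℝ) × (Fin k → ℝ) → ℝ) (x : XQPU n k) : ℝ :=
  dotR x.2.1 (Γ (x.1, x.2.2)) - L (x.1, x.2.2)

/-- The set `ℒ_{C,L} ⊆ T*TQ`: points `(q, q̇, a, b)` such that for some `u`,
`q̇ = Γ(q,u)`, `a + bᵀ ∂Γ/∂q = ∂L/∂q` and `bᵀ ∂Γ/∂u = ∂L/∂u`. -/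
def LCL {n k : ℕ} (Γ : (Fin n → ℝ) × (Fin k → ℝ) → (Fin n → ℝ))
    (L : (Fin n → ℝ) × (Fin k → ℝ) → ℝ) : Set (R4n n) :=
  {y | ∃ u : Fin k → ℝ,
    y.2.1 = Γ (y.1, u) ∧
    (∀ i, y.2.2.1 i + dotR y.2.2.2 (fderiv ℝ Γ (y.1, u) (Pi.single i 1, 0)) =
      fderiv ℝ L (y.1, u) (Pi.single i 1, 0)) ∧
    (∀ c, dotR y.2.2.2 (fderiv ℝ Γ (y.1, u) (0, Pi.single c 1)) =
      fderiv ℝ L (y.1, u) (0, Pi.single c 1))}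

/-- The set `D_H ⊆ TT*Q`: points `(q, p, ∂H/∂p, −∂H/∂q)` with `∂H/∂u = 0`. -/
def DH {n k : ℕ} (Γ : (Fin n → ℝ) × (Fin k → ℝ) → (Fin n → ℝ))
    (L : (Fin n → ℝ) × (Fin k → ℝ) → ℝ) : Set (R4n n) :=
  {d | ∃ u : Fin k → ℝ,
    (∀ i, d.2.2.1 i = fderiv ℝ (pontryaginH Γ L) (d.1, d.2.1, u) (0, Pi.single i 1, 0)) ∧
    (∀ i, d.2.2.2 i = -fderiv ℝ (pontryaginH Γ L) (d.1, d.2.1, u) (Pi.single i 1, 0, 0)) ∧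
    (∀ c, fderiv ℝ (pontryaginH Γ L) (d.1, d.2.1, u) (0, 0, Pi.single c 1) = 0)}

/-- The local expression of the Tulczyjew map `α(q,p,q̇,ṗ) = (q,q̇,ṗ,p)`. -/
def alphaMap {n : ℕ} (x : R4n n) : R4n n := (x.1, x.2.2.1, x.2.2.2, x.2.1)

/-!
With `π (q, p, u) = (q, u)`, the product rule gives
`dH = (⟨p, dΓ⟩ - dL) ∘ π + ⟨dp, Γ⟩`. Hence `∂H/∂p = Γ`, and the components of `dL - ⟨p, dΓ⟩` along
`q` and `u` are `-∂H/∂q` and `-∂H/∂u`. For `μ = a dq + b dq̇` the equation `Γ*μ = dL` reads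
`a dq = dL - ⟨b, dΓ⟩`, that is, `a = -∂H/∂q` and `0 = ∂H/∂u` at `p = b`.
-/

section Pairing

variable {𝕜 E P U F G : Type*} [NontriviallyNormedField 𝕜]
  [NormedAddCommGroup E] [NormedSpace 𝕜 E] [NormedAddCommGroup P] [NormedSpace 𝕜 P]
  [NormedAddCommGroup U] [NormedSpace 𝕜 U] [NormedAddCommGroup F] [NormedSpace 𝕜 F]
  [NormedAddCommGroup G] [NormedSpace 𝕜 G]

theorem hasFDerivAt_pairing_sub (B : P →L[𝕜] F →L[𝕜] G) {f : E × U → F} {g : E × U → G}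
    {f' : E × U →L[𝕜] F} {g' : E × U →L[𝕜] G} {q : E} {u : U}
    (hf : HasFDerivAt f f' (q, u)) (hg : HasFDerivAt g g' (q, u)) (p : P) :
    HasFDerivAt (fun x : E × P × U => B x.2.1 (f (x.1, x.2.2)) - g (x.1, x.2.2))
      ((B p ∘L f' - g') ∘L (ContinuousLinearMap.id 𝕜 E).prodMap (.snd 𝕜 P U) +
        B.flip (f (q, u)) ∘L .fst 𝕜 P U ∘L .snd 𝕜 E (P × U)) (q, p, u) := by
  let forgetMomentum : E × P × U →L[𝕜] E × U :=
    (ContinuousLinearMap.id 𝕜 E).prodMap (.snd 𝕜 P U)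
  let momentum : E × P × U →L[𝕜] P := .fst 𝕜 P U ∘L .snd 𝕜 E (P × U)
  have hf_comp : HasFDerivAt (f ∘ forgetMomentum) (f' ∘L forgetMomentum) (q, p, u) :=
    hf.comp (q, p, u) forgetMomentum.hasFDerivAt
  have hg_comp : HasFDerivAt (g ∘ forgetMomentum) (g' ∘L forgetMomentum) (q, p, u) :=
    hg.comp (q, p, u) forgetMomentum.hasFDerivAt
  have hB := B.hasFDerivAt_of_bilinear (momentum.hasFDerivAt (x := (q, p, u))) hf_comp
  refine (hB.sub hg_comp).congr_fderiv ?_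
  ext x <;> simp [forgetMomentum, momentum, add_sub_right_comm]

end Pairing

theorem dotR_eq_dotProduct {n : ℕ} (a b : Fin n → ℝ) : dotR a b = a ⬝ᵥ b := rfl

theorem mem_image_alphaMap {n : ℕ} {S : Set (R4n n)} {q v a b : Fin n → ℝ} :
    (q, v, a, b) ∈ alphaMap '' S ↔ (q, b, v, a) ∈ S := by
  constructor
  · rintro ⟨⟨q', p, v', f⟩, hS, h⟩
    simp only [alphaMap, Prod.mk.injEq] at h
    obtain ⟨rfl, rfl, rfl, rfl⟩ := h
    exact hS
  · exact fun hS => ⟨(q, b, v, a), hS, rfl⟩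

section PontryaginHamiltonian

variable {n k : ℕ} {Γ : (Fin n → ℝ) × (Fin k → ℝ) → (Fin n → ℝ)}
  {L : (Fin n → ℝ) × (Fin k → ℝ) → ℝ} {q : Fin n → ℝ} {u : Fin k → ℝ}

theorem fderiv_pontryaginH_apply (hΓ : DifferentiableAt ℝ Γ (q, u))
    (hL : DifferentiableAt ℝ L (q, u)) (p v w : Fin n → ℝ) (z : Fin k → ℝ) :
    fderiv ℝ (pontryaginH Γ L) (q, p, u) (v, w, z) =
      dotR p (fderiv ℝ Γ (q, u) (v, z)) - fderiv ℝ L (q, u) (v, z) + dotR w (Γ (q, u)) := by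
  let pairing : (Fin n → ℝ) →L[ℝ] (Fin n → ℝ) →L[ℝ] ℝ :=
    (dotProductBilin ℝ ℝ).toContinuousBilinearMap
  have hH : HasFDerivAt (pontryaginH Γ L) _ (q, p, u) :=
    hasFDerivAt_pairing_sub pairing hΓ.hasFDerivAt hL.hasFDerivAt p
  rw [hH.fderiv]
  rfl

theorem fderiv_pontryaginH_state (hΓ : DifferentiableAt ℝ Γ (q, u))
    (hL : DifferentiableAt ℝ L (q, u)) (p v : Fin n → ℝ) :
    fderiv ℝ (pontryaginH Γ L) (q, p, u) (v, 0, 0) =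
      dotR p (fderiv ℝ Γ (q, u) (v, 0)) - fderiv ℝ L (q, u) (v, 0) := by
  simp [fderiv_pontryaginH_apply hΓ hL, dotR_eq_dotProduct]

theorem fderiv_pontryaginH_control (hΓ : DifferentiableAt ℝ Γ (q, u))
    (hL : DifferentiableAt ℝ L (q, u)) (p : Fin n → ℝ) (z : Fin k → ℝ) :
    fderiv ℝ (pontryaginH Γ L) (q, p, u) (0, 0, z) =
      dotR p (fderiv ℝ Γ (q, u) (0, z)) - fderiv ℝ L (q, u) (0, z) := by
  simp [fderiv_pontryaginH_apply hΓ hL, dotR_eq_dotProduct]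

theorem fderiv_pontryaginH_momentum (hΓ : DifferentiableAt ℝ Γ (q, u))
    (hL : DifferentiableAt ℝ L (q, u)) (p w : Fin n → ℝ) :
    fderiv ℝ (pontryaginH Γ L) (q, p, u) (0, w, 0) = dotR w (Γ (q, u)) := by
  simp [fderiv_pontryaginH_apply hΓ hL, dotR_eq_dotProduct, Prod.mk_zero_zero]

theorem fderiv_pontryaginH_momentum_single (hΓ : DifferentiableAt ℝ Γ (q, u))
    (hL : DifferentiableAt ℝ L (q, u)) (p : Fin n → ℝ) (i : Fin n) :
    fderiv ℝ (pontryaginH Γ L) (q, p, u) (0, Pi.single i 1, 0) = Γ (q, u) i := by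
  rw [fderiv_pontryaginH_momentum hΓ hL, dotR_eq_dotProduct, single_one_dotProduct]

theorem pullback_eqs_iff_pontryaginH_eqs (hΓ : DifferentiableAt ℝ Γ (q, u))
    (hL : DifferentiableAt ℝ L (q, u)) (a b : Fin n → ℝ) :
    ((∀ i, a i + dotR b (fderiv ℝ Γ (q, u) (Pi.single i 1, 0)) =
        fderiv ℝ L (q, u) (Pi.single i 1, 0)) ∧
      (∀ c, dotR b (fderiv ℝ Γ (q, u) (0, Pi.single c 1)) =
        fderiv ℝ L (q, u) (0, Pi.single c 1))) ↔
    ((∀ i, a i = -fderiv ℝ (pontryaginH Γ L) (q, b, u) (Pi.single i 1, 0, 0)) ∧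
      (∀ c, fderiv ℝ (pontryaginH Γ L) (q, b, u) (0, 0, Pi.single c 1) = 0)) := by
  simp only [fderiv_pontryaginH_state hΓ hL, fderiv_pontryaginH_control hΓ hL, neg_sub,
    eq_sub_iff_add_eq, sub_eq_zero]

theorem velocity_eq_iff_eq_fderiv_pontryaginH (hΓ : DifferentiableAt ℝ Γ (q, u))
    (hL : DifferentiableAt ℝ L (q, u)) (p v : Fin n → ℝ) :
    v = Γ (q, u) ↔
      ∀ i, v i = fderiv ℝ (pontryaginH Γ L) (q, p, u) (0, Pi.single i 1, 0) := by
  simp only [fderiv_pontryaginH_momentum_single hΓ hL, funext_iff]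

theorem LCL_eq_image_alphaMap_DH (hΓ : Differentiable ℝ Γ) (hL : Differentiable ℝ L) :
    LCL Γ L = alphaMap '' DH Γ L := by
  ext ⟨q, v, a, b⟩
  rw [mem_image_alphaMap]
  exact exists_congr fun u =>
    and_congr (velocity_eq_iff_eq_fderiv_pontryaginH (hΓ (q, u)) (hL (q, u)) b v)
      (pullback_eqs_iff_pontryaginH_eqs (hΓ (q, u)) (hL (q, u)) a b)

end PontryaginHamiltonian

/-- the defining equations of `ℒ_{C,L}` at `(q,u)` with covectors
`a,b` hold iff `a = −∂H/∂q(q,b,u)` and `∂H/∂u(q,b,u) = 0`; moreover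
`∂H/∂p(q,b,u) = Γ(q,u)`; consequently `ℒ_{C,L} = α(D_H)`. -/
theorem lagrangian_ocp_eq_tulczyjew_image {n k : ℕ}
    (Γ : (Fin n → ℝ) × (Fin k → ℝ) → (Fin n → ℝ))
    (L : (Fin n → ℝ) × (Fin k → ℝ) → ℝ)
    (hΓ : Differentiable ℝ Γ) (hL : Differentiable ℝ L) :
    (∀ (q a b : Fin n → ℝ) (u : Fin k → ℝ),
      ((∀ i, a i + dotR b (fderiv ℝ Γ (q, u) (Pi.single i 1, 0)) =
          fderiv ℝ L (q, u) (Pi.single i 1, 0)) ∧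
        (∀ c, dotR b (fderiv ℝ Γ (q, u) (0, Pi.single c 1)) =
          fderiv ℝ L (q, u) (0, Pi.single c 1))) ↔
      ((∀ i, a i = -fderiv ℝ (pontryaginH Γ L) (q, b, u) (Pi.single i 1, 0, 0)) ∧
        (∀ c, fderiv ℝ (pontryaginH Γ L) (q, b, u) (0, 0, Pi.single c 1) = 0))) ∧
    (∀ (q b : Fin n → ℝ) (u : Fin k → ℝ) (i : Fin n),
      fderiv ℝ (pontryaginH Γ L) (q, b, u) (0, Pi.single i 1, 0) = Γ (q, u) i) ∧
    LCL Γ L = alphaMap '' DH Γ L := by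
  exact ⟨fun q a b u => pullback_eqs_iff_pontryaginH_eqs (hΓ (q, u)) (hL (q, u)) a b,
    fun q b u i => fderiv_pontryaginH_momentum_single (hΓ (q, u)) (hL (q, u)) b i,
    LCL_eq_image_alphaMap_DH hΓ hL⟩
end
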